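/- arXiv:2507.06274 — 5 statements merged into one kernel-verified Lean document; each statement's English description precedes it below -/
import Mathlib

section
/- Fix a positive integer h, and for each positive integer d define the real number S(d) = (h/d) · ∑_{m=1}^{d} ((d - m + 1)/d)^{h-1} (equivalently, S(d) = (h/d) · ∑_{j=1}^{d} (j/d)^{h-1}). Then S is monotonically non-increasing in d, i.e. S(d+1) ≤ S(d) for every positive integer d; moreover, if h ≥ 2, then S(d+1) < S(d) for every positive integer d. -/
/-!
Reversing the order of summation, `S d = h * R d`, where `R d = (1/d) ∑_{j=1}^{d} (j/d)^k` with
`k = h - 1` is the right Riemann sum of the convex function `x ↦ x^k` on `[0, 1]`. For `k = 0` it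
is constantly `1`. For `k ≥ 1`, each node of the finer grid is a convex combination of two
neighbouring nodes of the coarser one,
`j/(d+1) = (j/(d+1)) * ((j-1)/d) + ((d+1-j)/(d+1)) * (j/d)`,
so convexity and summation over `j` give
`∑_{j=1}^{d+1} (j/(d+1))^k ≤ ((d+2)/(d+1)) * ∑_{j=1}^{d} (j/d)^k`, the node `0` contributing
nothing. Strict decrease then follows from `d * (d+2) < (d+1)^2`.
-/

/-- Convexity of `x ↦ x^k` at the node `(i+1)/(d+1)`, which lies between `i/d` and `(i+1)/d`. -/
lemma node_pow_le (k d i : ℕ) (hd : 0 < d) (hi : i ≤ d) :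
    (((i : ℝ) + 1) / (d + 1)) ^ k ≤
      (((i : ℝ) + 1) * ((i : ℝ) / d) ^ k + ((d : ℝ) - i) * (((i : ℝ) + 1) / d) ^ k) / (d + 1) := by
  have hd' : (0 : ℝ) < d := by exact_mod_cast hd
  have hi' : (i : ℝ) ≤ d := by exact_mod_cast hi
  have h1 : (0 : ℝ) ≤ (i : ℝ) / d := by positivity
  have h2 : (0 : ℝ) ≤ ((i : ℝ) + 1) / d := by positivity
  have h3 : (0 : ℝ) ≤ ((i : ℝ) + 1) / (d + 1) := by positivity
  have h4 : (0 : ℝ) ≤ ((d : ℝ) - i) / (d + 1) := div_nonneg (by linarith) (by linarith)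
  have key := (convexOn_pow (𝕜 := ℝ) k).2 h1 h2 h3 h4 (by field_simp; ring)
  simp only [smul_eq_mul] at key
  have e : ((i : ℝ) + 1) / (d + 1) * ((i : ℝ) / d) + ((d : ℝ) - i) / (d + 1) * (((i : ℝ) + 1) / d)
      = ((i : ℝ) + 1) / (d + 1) := by
    field_simp
    ring
  rw [e] at key
  refine key.trans (le_of_eq ?_)
  ring

lemma sum_node_pow_le (k d : ℕ) (hd : 0 < d) (hk : k ≠ 0) :
    ∑ i ∈ Finset.range (d + 1), (((i : ℝ) + 1) / (d + 1)) ^ k ≤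
      ((d : ℝ) + 2) / (d + 1) * ∑ i ∈ Finset.range d, (((i : ℝ) + 1) / d) ^ k := by
  refine (Finset.sum_le_sum fun i hi => node_pow_le k d i hd
    (Nat.lt_succ_iff.mp (Finset.mem_range.mp hi))).trans (le_of_eq ?_)
  -- Shift the index in the first sum; the last term of the second sum vanishes.
  rw [← Finset.sum_div, Finset.sum_add_distrib, Finset.sum_range_succ',
    Finset.sum_range_succ (fun i : ℕ => ((d : ℝ) - i) * (((i : ℝ) + 1) / d) ^ k)]
  simp only [Nat.cast_zero, zero_div, zero_pow hk, sub_self, zero_mul, mul_zero, add_zero]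
  rw [← Finset.sum_add_distrib, div_mul_eq_mul_div, Finset.mul_sum]
  congr 1
  refine Finset.sum_congr rfl fun i _ => ?_
  push_cast
  ring

lemma sum_Icc_reflect (k d : ℕ) :
    ∑ m ∈ Finset.Icc 1 d, (((d : ℝ) - m + 1) / d) ^ k =
      ∑ i ∈ Finset.range d, (((i : ℝ) + 1) / d) ^ k := by
  refine Finset.sum_bij' (fun m _ => d - m) (fun i _ => d - i) ?_ ?_ ?_ ?_ ?_
  · intro m hm
    simp only [Finset.mem_Icc, Finset.mem_range] at *
    omega
  · intro m hm
    simp only [Finset.mem_Icc, Finset.mem_range] at *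
    omega
  · intro m hm
    simp only [Finset.mem_Icc] at *
    omega
  · intro m hm
    simp only [Finset.mem_range] at *
    omega
  · intro m hm
    rw [Nat.cast_sub (Finset.mem_Icc.mp hm).2]

/-- Fix a positive integer `h`, and for each positive integer `d` define
`S d = (h/d) ∑_{m=1}^{d} ((d - m + 1)/d)^(h-1)`. Then `S` is monotonically
non-increasing in `d`, i.e. `S (d+1) ≤ S d` for every positive integer `d`;
moreover, if `h ≥ 2`, then `S (d+1) < S d` for every positive integer `d`. -/
theorem expected_min_attainers_antitone (h : ℕ) (hh : 0 < h) (S : ℕ → ℝ)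
    (hS : ∀ d : ℕ, S d = ((h : ℝ) / d) *
      ∑ m ∈ Finset.Icc 1 d, (((d : ℝ) - m + 1) / d) ^ (h - 1)) :
    (∀ d : ℕ, 0 < d → S (d + 1) ≤ S d) ∧
      (2 ≤ h → ∀ d : ℕ, 0 < d → S (d + 1) < S d) := by
  have strict : 2 ≤ h → ∀ d : ℕ, 0 < d → S (d + 1) < S d := by
    intro h2 d hd
    have hd' : (0 : ℝ) < d := by exact_mod_cast hd
    have hh' : (0 : ℝ) < h := by exact_mod_cast hh
    have key := sum_node_pow_le (h - 1) d hd (by omega)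
    rw [hS, hS, sum_Icc_reflect, sum_Icc_reflect]
    push_cast
    have hpos : 0 < ∑ i ∈ Finset.range d, (((i : ℝ) + 1) / d) ^ (h - 1) :=
      Finset.sum_pos (fun i _ => by positivity) ⟨0, Finset.mem_range.mpr hd⟩
    refine (mul_le_mul_of_nonneg_left key (by positivity)).trans_lt ?_
    rw [← mul_assoc]
    refine mul_lt_mul_of_pos_right ?_ hpos
    rw [div_mul_div_comm, div_lt_div_iff₀ (by positivity) hd']
    nlinarith
  refine ⟨fun d hd => ?_, strict⟩
  rcases Nat.lt_or_ge h 2 with h1 | h2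
  · obtain rfl : h = 1 := by omega
    have hd' : (d : ℝ) ≠ 0 := by exact_mod_cast hd.ne'
    have hd1 : (d : ℝ) + 1 ≠ 0 := by positivity
    rw [hS, hS]
    simp [hd', hd1]
  · exact (strict h2 d hd).le
end

section
/- Let x and k be natural numbers with x ≤ k, and let p and q be real numbers. Then ∑_{z=x}^{k} C(k, z) · p^z · (1 - p)^{k - z} · C(z, x) · q^x · (1 - q)^{z - x} = C(k, x) · (p·q)^x · (1 - p·q)^{k - x}, where C(n, r) denotes the binomial coefficient n choose r. -/
/-- Binomial thinning identity: for natural numbers `x ≤ k` and real numbers `p`, `q`,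
`∑_{z=x}^{k} C(k,z) p^z (1-p)^(k-z) C(z,x) q^x (1-q)^(z-x)
  = C(k,x) (p q)^x (1 - p q)^(k-x)`. -/
theorem binomial_thinning (x k : ℕ) (hxk : x ≤ k) (p q : ℝ) :
    ∑ z ∈ Finset.Icc x k,
        (k.choose z : ℝ) * p ^ z * (1 - p) ^ (k - z) *
          (z.choose x : ℝ) * q ^ x * (1 - q) ^ (z - x)
      = (k.choose x : ℝ) * (p * q) ^ x * (1 - p * q) ^ (k - x) := by
  obtain ⟨m, rfl⟩ := Nat.exists_eq_add_of_le hxk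
  -- By `C(k,z) C(z,x) = C(k,x) C(k-x,z-x)`, the sum is `C(k,x) (p q)^x` times the binomial
  -- expansion of `(p (1 - q) + (1 - p))^(k-x)`, where `k - x = m`.
  have h : 1 - p * q = p * (1 - q) + (1 - p) := by ring
  rw [h, Nat.add_sub_cancel_left, add_pow, Finset.mul_sum, ← Finset.Ico_add_one_right_eq_Icc,
    Finset.sum_Ico_eq_sum_range, show x + m + 1 - x = m + 1 by omega]
  refine Finset.sum_congr rfl fun j _ => ?_
  have hc : ((x + m).choose (x + j) : ℝ) * ((x + j).choose x : ℝ)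
      = ((x + m).choose x : ℝ) * (m.choose j : ℝ) := by
    have := Nat.choose_mul (n := x + m) (Nat.le_add_right x j)
    rw [Nat.add_sub_cancel_left, Nat.add_sub_cancel_left] at this
    exact_mod_cast this
  rw [Nat.add_sub_add_left, Nat.add_sub_cancel_left, mul_pow, mul_pow, pow_add]
  linear_combination (p ^ x * p ^ j * (1 - p) ^ (m - j) * q ^ x * (1 - q) ^ j) * hc
end

section
/- Let h, x, k be natural numbers with 1 ≤ x ≤ k ≤ h, let d > 1 be a real number, and let γ ∈ (0, 1) be a real number satisfying γ ≥ (d - 1)/(d^{1 + x/h} - 1). Then ((1 - γ)/d)^x · (1 - (1 - γ)/d)^{k - x} < (1 - γ)^x · γ^{k - x}. -/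
/-!
Put `c = d ^ (x / h)`, so `1 < c` and `c ^ h = d ^ x`. Clearing the denominator, the hypothesis on `γ`
says exactly that `1 - (1 - γ) / d ≤ γ * c`. Since `k - x < h`, it follows that
`(1 - (1 - γ) / d) ^ (k - x) ≤ γ ^ (k - x) * c ^ (k - x) < γ ^ (k - x) * d ^ x`,
and multiplying by `((1 - γ) / d) ^ x` gives the claim.
-/

/-- Let `h, x, k` be natural numbers with `1 ≤ x ≤ k ≤ h`, let `d > 1` be a real
number, and let `γ ∈ (0,1)` satisfy `γ ≥ (d - 1)/(d^(1 + x/h) - 1)`. Then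
`((1-γ)/d)^x (1 - (1-γ)/d)^(k-x) < (1-γ)^x γ^(k-x)`. -/
theorem seek_term_lt_kgw_term (h x k : ℕ) (hx : 1 ≤ x) (hxk : x ≤ k) (hkh : k ≤ h)
    (d γ : ℝ) (hd : 1 < d) (hγ0 : 0 < γ) (hγ1 : γ < 1)
    (hγ : (d - 1) / (d ^ ((1 : ℝ) + (x : ℝ) / (h : ℝ)) - 1) ≤ γ) :
    ((1 - γ) / d) ^ x * (1 - (1 - γ) / d) ^ (k - x) < (1 - γ) ^ x * γ ^ (k - x) := by
  have hd0 : 0 < d := by linarith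
  have hxR : (0 : ℝ) < x := by exact_mod_cast hx
  have hhR : (0 : ℝ) < h := by
    have : 0 < h := by omega
    exact_mod_cast this
  rw [Real.rpow_add hd0, Real.rpow_one] at hγ
  have hc1 : 1 < d ^ ((x : ℝ) / (h : ℝ)) := Real.one_lt_rpow hd (div_pos hxR hhR)
  have hch : (d ^ ((x : ℝ) / (h : ℝ))) ^ h = d ^ x := by
    rw [← Real.rpow_mul_natCast hd0.le, div_mul_cancel₀ _ hhR.ne', Real.rpow_natCast]
  generalize d ^ ((x : ℝ) / (h : ℝ)) = c at hγ hc1 hch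
  have hdc : 0 < d * c - 1 := by nlinarith
  rw [div_le_iff₀ hdc] at hγ
  have ht : 1 - (1 - γ) / d = (d - 1 + γ) / d := by field_simp; ring
  have ht0 : 0 ≤ 1 - (1 - γ) / d := by
    rw [ht]
    exact div_nonneg (by linarith) hd0.le
  have htc : 1 - (1 - γ) / d ≤ γ * c := by
    rw [ht, div_le_iff₀ hd0]
    linarith
  have hpow : c ^ (k - x) < d ^ x := by
    rw [← hch]
    exact pow_lt_pow_right₀ hc1 (by omega)
  have hγ2 : 0 < 1 - γ := by linarith
  calc ((1 - γ) / d) ^ x * (1 - (1 - γ) / d) ^ (k - x)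
      ≤ ((1 - γ) / d) ^ x * (γ * c) ^ (k - x) := by gcongr
    _ = ((1 - γ) / d) ^ x * (γ ^ (k - x) * c ^ (k - x)) := by rw [mul_pow]
    _ < ((1 - γ) / d) ^ x * (γ ^ (k - x) * d ^ x) := by gcongr
    _ = (1 - γ) ^ x * γ ^ (k - x) := by
      rw [div_pow]
      field_simp
end

section
/- Let h, i, k be natural numbers with 0 ≤ k < i ≤ h and h + k ≥ 2, and let d be a real number with d ≥ (i + h)^{2h} / ((i - k)·(h + k - 1)). Then (1/d)^{i - k} · (1 - 1/d)^{h + k - 1} < (i - k)! · (k + h - 1)! / (i + h)!. -/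
/-!
Write `a = i - k ≥ 1`, `b = h + k - 1 ≥ 1` and `N = i + h = a + b + 1`. The factor `(1 - 1/d)^b`
is below `1`, and since `d > 1` the other factor is at most `1/d ≤ a b / N ^ (2h)`. The right-hand
side is at least this large: `a b N! / (a! b!) = N! / ((a-1)! (b-1)!)`, where `N! / (b-1)!` is a
falling factorial of length `a + 2`, hence at most `N ^ (a + 2)`. Finally `a ≤ h`, and `h ≥ 2`
because `h = 1` would force `i = 1`, `k = 0`, against `h + k ≥ 2`; so `a + 2 ≤ 2h`.
-/

theorem factorial_le_factorial_mul_pow (a b : ℕ) :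
    (a + b + 3).factorial ≤ b.factorial * (a + b + 3) ^ (a + 3) := by
  have h := Nat.factorial_mul_descFactorial (show a + 3 ≤ a + b + 3 by omega)
  rw [show a + b + 3 - (a + 3) = b by omega] at h
  rw [← h]
  exact Nat.mul_le_mul_left _ (Nat.descFactorial_le_pow _ _)

/-- The bound in terms of the exponents `a + 1 = i - k` and `b + 1 = h + k - 1`, with
`a + b + 3 = i + h` and `m` in place of `2 * h`. -/
theorem beta_bound_shifted (a b m : ℕ) (hm : a + 3 ≤ m) (d : ℝ)
    (hd : ((a + b + 3 : ℕ) : ℝ) ^ m / (((a + 1 : ℕ) : ℝ) * ((b + 1 : ℕ) : ℝ)) ≤ d) :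
    (1 / d) ^ (a + 1) * (1 - 1 / d) ^ (b + 1) <
      ((a + 1).factorial : ℝ) * ((b + 1).factorial : ℝ) / ((a + b + 3).factorial : ℝ) := by
  have hab : (0 : ℝ) < ((a + 1 : ℕ) : ℝ) * ((b + 1 : ℕ) : ℝ) := by positivity
  have hd1 : 1 < d := by
    refine lt_of_lt_of_le ?_ hd
    rw [one_lt_div hab]
    have h1 : (a + 1) * (b + 1) < (a + b + 3) ^ m := calc
      (a + 1) * (b + 1) < (a + b + 3) ^ 2 := by nlinarith [Nat.zero_le (a * b)]
      _ ≤ (a + b + 3) ^ m := Nat.pow_le_pow_right (by omega) (by omega)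
    exact_mod_cast h1
  have hd0 : 0 < d := by linarith
  have hinv : 0 < 1 / d := by positivity
  have hinv1 : 1 / d < 1 := (div_lt_one hd0).2 hd1
  have hfac : (((a + b + 3).factorial : ℕ) : ℝ) ≤
      a.factorial * b.factorial * ((a + b + 3 : ℕ) : ℝ) ^ m := by
    have h1 : (a + b + 3).factorial ≤ a.factorial * b.factorial * (a + b + 3) ^ m := calc
      _ ≤ b.factorial * (a + b + 3) ^ (a + 3) := factorial_le_factorial_mul_pow a b
      _ ≤ b.factorial * (a + b + 3) ^ m :=
        Nat.mul_le_mul_left _ (Nat.pow_le_pow_right (by omega) hm)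
      _ ≤ a.factorial * (b.factorial * (a + b + 3) ^ m) :=
        Nat.le_mul_of_pos_left _ a.factorial_pos
      _ = _ := (mul_assoc _ _ _).symm
    exact_mod_cast h1
  calc (1 / d) ^ (a + 1) * (1 - 1 / d) ^ (b + 1)
      < (1 / d) ^ (a + 1) * 1 := by
        gcongr
        exact pow_lt_one₀ (by linarith) (by linarith) (by omega)
    _ ≤ 1 / d := by
        rw [mul_one]
        exact pow_le_of_le_one hinv.le hinv1.le (by omega)
    _ ≤ _ := by
        rw [div_le_div_iff₀ hd0 (by positivity), one_mul]
        rw [div_le_iff₀ hab] at hd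
        calc (((a + b + 3).factorial : ℕ) : ℝ)
            ≤ a.factorial * b.factorial * ((a + b + 3 : ℕ) : ℝ) ^ m := hfac
          _ ≤ a.factorial * b.factorial * (d * (((a + 1 : ℕ) : ℝ) * ((b + 1 : ℕ) : ℝ))) := by
              gcongr
          _ = _ := by
              rw [Nat.factorial_succ a, Nat.factorial_succ b]
              push_cast
              ring


/-- Let `h, i, k` be natural numbers with `k < i ≤ h` and `h + k ≥ 2`, and let `d` be a
real number with `d ≥ (i + h)^(2h) / ((i - k)(h + k - 1))`. Then
`(1/d)^(i-k) (1 - 1/d)^(h+k-1) < (i-k)! (k+h-1)! / (i+h)!`. -/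
theorem seek_beta_bound (h i k : ℕ) (hki : k < i) (hih : i ≤ h) (hhk : 2 ≤ h + k)
    (d : ℝ)
    (hd : ((i : ℝ) + h) ^ (2 * h) / (((i - k : ℕ) : ℝ) * ((h + k - 1 : ℕ) : ℝ)) ≤ d) :
    (1 / d) ^ (i - k) * (1 - 1 / d) ^ (h + k - 1) <
      ((i - k).factorial : ℝ) * ((k + h - 1).factorial : ℝ) / ((i + h).factorial : ℝ) := by
  obtain ⟨a, ha⟩ : ∃ a, i - k = a + 1 := ⟨i - k - 1, by omega⟩
  obtain ⟨b, hb⟩ : ∃ b, h + k - 1 = b + 1 := ⟨h + k - 2, by omega⟩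
  have hN : i + h = a + b + 3 := by omega
  rw [← Nat.cast_add, ha, hb, hN] at hd
  rw [add_comm k h, ha, hb, hN]
  exact beta_bound_shifted a b (2 * h) (by omega) d hd
end

section
/- Let h and x be natural numbers with 1 ≤ x ≤ h, let d > 1 be a real number, and let γ ∈ (0, 1) be a real number satisfying γ ≥ (d - 1)/(d^{1 + x/h} - 1). Then ∑_{i=x}^{h} ∑_{k=x}^{i} (1/d)^{i-k} · (1 - 1/d)^{h+k-1} · C(k, x) · ((1 - γ)/d)^x · (1 - (1 - γ)/d)^{k-x} < ∑_{i=x}^{h} ∑_{k=x}^{i} (1/d)^{i-k} · (1 - 1/d)^{h+k-1} · C(k, x) · (1 - γ)^x · γ^{k-x}. -/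
/-!
The inequality holds term by term. Put `t = d ^ (x / h)`, so that `t > 1` and `t ^ h = d ^ x`.
The lower bound on `γ` says exactly that `1 - (1 - γ) / d ≤ t * γ`. Since `k - x < h`, it gives
`(1 - (1 - γ) / d) ^ (k - x) ≤ t ^ (k - x) * γ ^ (k - x) < d ^ x * γ ^ (k - x)`, and the factor
`d ^ x` is what distinguishes `((1 - γ) / d) ^ x` from `(1 - γ) ^ x`.
-/


/-- Let `h, x` be natural numbers with `1 ≤ x ≤ h`, let `d > 1` be a real number, and
let `γ ∈ (0,1)` satisfy `γ ≥ (d-1)/(d^(1 + x/h) - 1)`. Then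
`∑_{i=x}^{h} ∑_{k=x}^{i} (1/d)^(i-k) (1 - 1/d)^(h+k-1) C(k,x) ((1-γ)/d)^x (1-(1-γ)/d)^(k-x)
 < ∑_{i=x}^{h} ∑_{k=x}^{i} (1/d)^(i-k) (1 - 1/d)^(h+k-1) C(k,x) (1-γ)^x γ^(k-x)`. -/
theorem seek_prob_lt_kgw_bound (h x : ℕ) (hx : 1 ≤ x) (hxh : x ≤ h)
    (d γ : ℝ) (hd : 1 < d) (hγ0 : 0 < γ) (hγ1 : γ < 1)
    (hγ : (d - 1) / (d ^ ((1 : ℝ) + (x : ℝ) / (h : ℝ)) - 1) ≤ γ) :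
    ∑ i ∈ Finset.Icc x h, ∑ k ∈ Finset.Icc x i,
        (1 / d) ^ (i - k) * (1 - 1 / d) ^ (h + k - 1) * (k.choose x : ℝ) *
          ((1 - γ) / d) ^ x * (1 - (1 - γ) / d) ^ (k - x)
      < ∑ i ∈ Finset.Icc x h, ∑ k ∈ Finset.Icc x i,
          (1 / d) ^ (i - k) * (1 - 1 / d) ^ (h + k - 1) * (k.choose x : ℝ) *
            (1 - γ) ^ x * γ ^ (k - x) := by
  have hd0 : 0 < d := by linarith
  have hh : (0 : ℝ) < h := by exact_mod_cast lt_of_lt_of_le hx hxh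
  have hx0 : (0 : ℝ) < x := by exact_mod_cast hx
  set t : ℝ := d ^ ((x : ℝ) / (h : ℝ)) with ht
  have ht1 : 1 < t := Real.one_lt_rpow hd (by positivity)
  have hth : t ^ h = d ^ x := by
    rw [ht, ← Real.rpow_natCast, ← Real.rpow_mul hd0.le, div_mul_cancel₀ _ hh.ne',
      Real.rpow_natCast]
  have hbase : 1 - (1 - γ) / d ≤ t * γ := by
    rw [Real.rpow_add hd0, Real.rpow_one, ← ht, div_le_iff₀ (by nlinarith)] at hγ
    have e : 1 - (1 - γ) / d = (d - 1 + γ) / d := by field_simp; ring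
    rw [e, div_le_iff₀ hd0]
    linarith
  have hbase0 : 0 ≤ 1 - (1 - γ) / d := by
    rw [sub_nonneg, div_le_one hd0]
    linarith
  have hγ' : 0 < 1 - γ := by linarith
  have hd' : 0 < 1 - 1 / d := by
    rw [sub_pos, div_lt_one hd0]
    exact hd
  refine Finset.sum_lt_sum_of_nonempty ⟨x, Finset.mem_Icc.2 ⟨le_rfl, hxh⟩⟩ fun i hi => ?_
  rw [Finset.mem_Icc] at hi
  refine Finset.sum_lt_sum_of_nonempty ⟨x, Finset.mem_Icc.2 ⟨le_rfl, hi.1⟩⟩ fun k hk => ?_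
  rw [Finset.mem_Icc] at hk
  have hpow : (1 - (1 - γ) / d) ^ (k - x) < d ^ x * γ ^ (k - x) :=
    calc (1 - (1 - γ) / d) ^ (k - x) ≤ (t * γ) ^ (k - x) := pow_le_pow_left₀ hbase0 hbase _
      _ = t ^ (k - x) * γ ^ (k - x) := mul_pow _ _ _
      _ < t ^ h * γ ^ (k - x) :=
        mul_lt_mul_of_pos_right (pow_lt_pow_right₀ ht1 (by omega)) (pow_pos hγ0 _)
      _ = d ^ x * γ ^ (k - x) := by rw [hth]
  have hc : (0 : ℝ) < k.choose x := by exact_mod_cast Nat.choose_pos hk.1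
  have key : ((1 - γ) / d) ^ x * (1 - (1 - γ) / d) ^ (k - x) < (1 - γ) ^ x * γ ^ (k - x) := by
    rw [div_pow, div_mul_eq_mul_div, div_lt_iff₀ (pow_pos hd0 x)]
    calc (1 - γ) ^ x * (1 - (1 - γ) / d) ^ (k - x)
        < (1 - γ) ^ x * (d ^ x * γ ^ (k - x)) := mul_lt_mul_of_pos_left hpow (pow_pos hγ' x)
      _ = (1 - γ) ^ x * γ ^ (k - x) * d ^ x := by ring
  rw [mul_assoc _ (((1 - γ) / d) ^ x), mul_assoc _ ((1 - γ) ^ x)]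
  exact mul_lt_mul_of_pos_left key (by positivity)
end
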